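/- Suppose the cost function c satisfies c(s,u) > 0 and c(u,t) > 0 for every u ∈ V (and c(e) ≥ 0 for all e ∈ E'), and let C be a minimum s–t cut of G'. Define the labelling f_C : V → {0,1} by f_C(u) = 1 if (s,u) ∈ C and f_C(u) = 0 otherwise. Then f_C minimizes the energy: E(f_C) ≤ E(g) for every labelling g : V → {0,1}. (Thus the labelling read off from the cut labelling links of a minimum cut solves the energy minimisation problem.) -/

import Mathlib

/-!
Every labelling `g` determines the cut `labelCut g` separating `s` and the nodes labelled `0` from
`t` and the nodes labelled `1`, and the energy of `g` is the cost of that cut, because labelling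
links and social links are pairwise distinct edges. So the energy of `g` is at least the cost of
the minimum cut `C` (`isCut_labelCut`, `energy_eq_sum_labelCut`).

Conversely, if `f` is read off from `C`, then `labelCut f ⊆ C`, so the energy of `f` is at most the
cost of `C`. The key point is that a link `(s, v) ∈ C` of a minimum cut ends at a node unreachable
from `s` in `E' \ C`: otherwise `(s, v)` could be dropped from `C`, and it has positive cost
(`IsMinCut.not_reaches`). Hence a social link from a node labelled `0`, which is reachable, to one
labelled `1`, which is not, lies in `C`.
-/

open Finset

variable {α : Type*}

/-- Edge set `E'` of the augmented graph `G'`: the social links `E` together with the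
labelling links `(s,u)` and `(u,t)` for each user node `u ∈ V`. -/
def augEdges [DecidableEq α] (V : Finset α) (s t : α) (E : Finset (α × α)) :
    Finset (α × α) :=
  E ∪ V.image (fun u => (s, u)) ∪ V.image (fun u => (u, t))

/-- `Reaches A x y` : there is a directed path from `x` to `y` using only edges in `A`. -/
def Reaches (A : Finset (α × α)) (x y : α) : Prop :=
  Relation.ReflTransGen (fun a b => (a, b) ∈ A) x y

/-- `C` is an s–t cut of the augmented graph: `C ⊆ E'` and there is no directed path
from `s` to `t` using only edges of `E' \ C`. -/
def IsCut [DecidableEq α] (V : Finset α) (s t : α) (E C : Finset (α × α)) : Prop :=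
  C ⊆ augEdges V s t E ∧ ¬ Reaches (augEdges V s t E \ C) s t

/-- `C` is a minimum s–t cut for the cost function `c`. -/
def IsMinCut [DecidableEq α] (V : Finset α) (s t : α) (E : Finset (α × α))
    (c : α × α → ℝ) (C : Finset (α × α)) : Prop :=
  IsCut V s t E C ∧ ∀ C', IsCut V s t E C' → ∑ e ∈ C, c e ≤ ∑ e ∈ C', c e

/-- The energy `E(f)` of a labelling `f : V → {0,1}`. -/
def energy [DecidableEq α] (V : Finset α) (s t : α) (E : Finset (α × α))
    (c : α × α → ℝ) (f : α → Fin 2) : ℝ :=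
  (∑ u ∈ V.filter fun u => f u = 0, c (u, t)) +
    (∑ u ∈ V.filter fun u => f u = 1, c (s, u)) +
    ∑ e ∈ E.filter (fun e => f e.1 = 0 ∧ f e.2 = 1), c e

/-- The edges of `G'` leading from the `s`-side to the `t`-side of a labelling, where the `s`-side
consists of `s` and the nodes labelled `0`. -/
def labelCut [DecidableEq α] (V : Finset α) (s t : α) (E : Finset (α × α)) (f : α → Fin 2) :
    Finset (α × α) :=
  (V.filter fun u => f u = 0).image (fun u => (u, t)) ∪
    (V.filter fun u => f u = 1).image (fun u => (s, u)) ∪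
    E.filter (fun e => f e.1 = 0 ∧ f e.2 = 1)

theorem mem_augEdges [DecidableEq α] {V : Finset α} {s t : α} {E : Finset (α × α)} {a b : α} :
    (a, b) ∈ augEdges V s t E ↔ (a, b) ∈ E ∨ (a = s ∧ b ∈ V) ∨ (a ∈ V ∧ b = t) := by
  simp only [augEdges, mem_union, mem_image, Prod.mk.injEq]
  grind

theorem mem_labelCut [DecidableEq α] {V : Finset α} {s t : α} {E : Finset (α × α)}
    {f : α → Fin 2} {a b : α} :
    (a, b) ∈ labelCut V s t E f ↔
      (a ∈ V ∧ f a = 0 ∧ b = t) ∨ (a = s ∧ b ∈ V ∧ f b = 1) ∨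
        ((a, b) ∈ E ∧ f a = 0 ∧ f b = 1) := by
  simp only [labelCut, mem_union, mem_image, mem_filter, Prod.mk.injEq]
  grind

theorem energy_eq_sum_labelCut [DecidableEq α] {V : Finset α} {s t : α} {E : Finset (α × α)}
    (hs : s ∉ V) (ht : t ∉ V) (hE : ∀ e ∈ E, e.1 ∈ V ∧ e.2 ∈ V) (c : α × α → ℝ)
    (f : α → Fin 2) :
    energy V s t E c f = ∑ e ∈ labelCut V s t E f, c e := by
  unfold labelCut energy
  rw [sum_union, sum_union, sum_image, sum_image]
  · intro a _ b _ h
    exact congrArg Prod.snd h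
  · intro a _ b _ h
    exact congrArg Prod.fst h
  · rw [disjoint_left]
    rintro ⟨a, b⟩ h1 h2
    simp only [mem_image, mem_filter, Prod.mk.injEq] at h1 h2
    grind
  · rw [disjoint_left]
    rintro ⟨a, b⟩ h1 h2
    have h3 := hE _ (mem_filter.1 h2).1
    simp only [mem_union, mem_image, mem_filter, Prod.mk.injEq] at h1
    grind

theorem isCut_labelCut [DecidableEq α] {V : Finset α} {s t : α} {E : Finset (α × α)}
    (hs : s ∉ V) (ht : t ∉ V) (hst : s ≠ t) (hE : ∀ e ∈ E, e.1 ∈ V ∧ e.2 ∈ V)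
    (f : α → Fin 2) : IsCut V s t E (labelCut V s t E f) := by
  refine ⟨?_, fun h => ?_⟩
  · rintro ⟨a, b⟩ h
    rw [mem_labelCut] at h
    rw [mem_augEdges]
    grind
  · -- Paths avoiding the cut never leave the `s`-side.
    have key : ∀ x, Reaches (augEdges V s t E \ labelCut V s t E f) s x →
        x = s ∨ (x ∈ V ∧ f x = 0) := by
      intro x hx
      induction hx with
      | refl => exact Or.inl rfl
      | @tail a b _ hab ih =>
        rw [mem_sdiff, mem_augEdges, mem_labelCut] at hab
        have hE' := hE (a, b)
        have hf : f b = 0 ∨ f b = 1 := by omega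
        grind
    rcases key t h with h | h
    · exact hst h.symm
    · exact ht h.1

/-- In a minimum cut, the end node of a cut link `(s, v)` of positive cost is unreachable from `s`:
otherwise the link could be dropped from the cut without reconnecting anything. -/
theorem IsMinCut.not_reaches [DecidableEq α] {V : Finset α} {s t : α} {E : Finset (α × α)}
    {c : α × α → ℝ} {C : Finset (α × α)} (hC : IsMinCut V s t E c C) {v : α}
    (hv : (s, v) ∈ C) (hpos : 0 < c (s, v)) : ¬ Reaches (augEdges V s t E \ C) s v := by
  intro hr
  have hcut : IsCut V s t E (C.erase (s, v)) := by
    refine ⟨(erase_subset _ _).trans hC.1.1, fun h => hC.1.2 ?_⟩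
    have key : ∀ x, Reaches (augEdges V s t E \ C.erase (s, v)) s x →
        Reaches (augEdges V s t E \ C) s x := by
      intro x hx
      induction hx with
      | refl => exact Relation.ReflTransGen.refl
      | @tail a b _ hab ih =>
        by_cases hb : b = v
        · exact hb ▸ hr
        · refine Relation.ReflTransGen.tail ih ?_
          simp only [mem_sdiff, mem_erase, ne_eq, Prod.mk.injEq] at hab ⊢
          grind
    exact key t h
  have h1 := hC.2 _ hcut
  have h2 := sum_erase_add C c hv
  linarith


/-- If the labelling-link costs are strictly positive and `C` is a minimum s–t cut,
then the labelling read off from the cut labelling links of `C` (label `1` iff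
`(s,u) ∈ C`) minimizes the energy. -/
theorem label_of_minCut_minimizes_energy
    [DecidableEq α] (V : Finset α) (s t : α) (E : Finset (α × α))
    (hs : s ∉ V) (ht : t ∉ V) (hst : s ≠ t)
    (hE : ∀ e ∈ E, e.1 ∈ V ∧ e.2 ∈ V)
    (c : α × α → ℝ) (hc : ∀ e ∈ augEdges V s t E, 0 ≤ c e)
    (hcs : ∀ u ∈ V, 0 < c (s, u)) (hct : ∀ u ∈ V, 0 < c (u, t))
    (C : Finset (α × α)) (hC : IsMinCut V s t E c C) :
    ∀ g : α → Fin 2,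
      energy V s t E c (fun u => if (s, u) ∈ C then 1 else 0) ≤ energy V s t E c g := by
  intro g
  rw [energy_eq_sum_labelCut hs ht hE, energy_eq_sum_labelCut hs ht hE]
  refine le_trans ?_ (hC.2 _ (isCut_labelCut hs ht hst hE g))
  refine sum_le_sum_of_subset_of_nonneg ?_ fun e he _ => hc e (hC.1.1 he)
  have reach : ∀ u ∈ V, (s, u) ∉ C → Reaches (augEdges V s t E \ C) s u := fun u hu h =>
    Relation.ReflTransGen.single
      (mem_sdiff.2 ⟨mem_augEdges.2 (Or.inr (Or.inl ⟨rfl, hu⟩)), h⟩)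
  rintro ⟨a, b⟩ h
  rw [mem_labelCut] at h
  rcases h with ⟨ha, hfa, rfl⟩ | ⟨rfl, hb, hfb⟩ | ⟨he, hfa, hfb⟩
  · have ha' : (s, a) ∉ C := by simpa using hfa
    by_contra hn
    exact hC.1.2 ((reach a ha ha').tail
      (mem_sdiff.2 ⟨mem_augEdges.2 (Or.inr (Or.inr ⟨ha, rfl⟩)), hn⟩))
  · simpa using hfb
  · have ha' : (s, a) ∉ C := by simpa using hfa
    have hb' : (s, b) ∈ C := by simpa using hfb
    have hV := hE _ he
    by_contra hn
    exact hC.not_reaches hb' (hcs b hV.2) ((reach a hV.1 ha').tail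
      (mem_sdiff.2 ⟨mem_augEdges.2 (Or.inl he), hn⟩))
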